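/- arXiv:2601.18715 — 2 statements merged into one kernel-verified Lean document; each statement's English description precedes it below -/
import Mathlib

section
/- Let m and k be integers with 1 ≤ k < m, let δ = m + k, and let S = {m, m+δ, 2m+δ} = {m, 2m+k, 3m+k}. Then gcd(m,k) divides m·(4m + 3k), and for every x ≥ 1, v_S(x + m·(4m + 3k)/gcd(m,k)) = v_S(x); that is, the nim-sequence of S is purely periodic with period m·(4m + 3k)/gcd(m,k). -/
/-- The minimum excludant of a finite set of naturals. -/
noncomputable def mex (A : Finset ℕ) : ℕ := sInf {n : ℕ | n ∉ A}

/-- The sink-subtraction nim-value function: `sinkVal S 0 = 0`, and for `x ≥ 1`,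
`sinkVal S x = mex { sinkVal S (x ∸ s) : s ∈ S }` (when every `s ∈ S` is positive,
since `(x+1) - s = x - (s-1)` in truncated subtraction). -/
noncomputable def sinkVal (S : Finset ℕ) : ℕ → ℕ
  | 0 => 0
  | x + 1 => mex (S.image fun s => sinkVal S (x - (s - 1)))
termination_by x => x
decreasing_by omega

/-!
The nim-sequence splits into rounds. A round is described by its *lag* `a`, with `0 ≤ a < m`: the
lag fixes enough of the values just before the round to force the first `3 * m + k` values of the
round, and since no move exceeds `3 * m + k`, these force all later values. Computing one
round block by block shows that the next one has lag `(a + k) % m` and starts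
`4 * m + 3 * k + a - (a + k) % m` positions later. The lags telescope: counting from round
`0`, which has lag `0`, round `n` begins at `n * (4 * m + 3 * k) - n * k % m` and has lag
`n * k % m`. For `n = m / gcd m k` the lag is `0` again, and the sequence repeats.
-/

open Set

theorem mex_eq_of_forall_lt_mem {A : Finset ℕ} {n : ℕ} (hn : n ∉ A) (hlt : ∀ j < n, j ∈ A) :
    mex A = n :=
  IsLeast.csInf_eq ⟨hn, fun _ hb => not_lt.1 fun hbn => hb (hlt _ hbn)⟩

theorem sinkVal_eq_mex {S : Finset ℕ} (hS : ∀ s ∈ S, 0 < s) {x : ℕ} (hx : 0 < x) :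
    sinkVal S x = mex (S.image fun s => sinkVal S (x - s)) := by
  obtain ⟨x, rfl⟩ := Nat.exists_eq_add_one.2 hx
  rw [sinkVal]
  congr 1
  refine Finset.image_congr fun s hs => ?_
  have hs_pos := hS s hs
  rw [show x - (s - 1) = x + 1 - s by omega]

/-- `f` obeys the nim-value recurrence of the subtraction set `S` at every positive position; its
values at the nonpositive positions, which seed the recurrence, are arbitrary. Working over `ℤ`
makes the notion stable under forward translation. -/
def IsNimSeq (S : Finset ℕ) (f : ℤ → ℕ) : Prop :=
  ∀ i, 0 < i → f i = mex (S.image fun s : ℕ => f (i - s))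

namespace IsNimSeq

variable {S : Finset ℕ} {f g : ℤ → ℕ}

theorem sinkVal_toNat (hS : ∀ s ∈ S, 0 < s) : IsNimSeq S fun i => sinkVal S i.toNat := by
  intro i hi
  simp only [sinkVal_eq_mex hS (show 0 < i.toNat by omega), Int.toNat_sub']

theorem comp_add_left (hf : IsNimSeq S f) {c : ℤ} (hc : 0 ≤ c) :
    IsNimSeq S fun i => f (c + i) := by
  intro i hi
  simp only [hf (c + i) (by omega), add_sub_assoc]

theorem eq_of_eqOn (hf : IsNimSeq S f) (hg : IsNimSeq S g) (hS : ∀ s ∈ S, 0 < s) {M : ℕ}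
    (hM : ∀ s ∈ S, s ≤ M) (hfg : EqOn f g (Ioc 0 M)) : EqOn f g (Ioi 0) := by
  have hnat (n : ℕ) : 0 < n → f n = g n := by
    induction n using Nat.strong_induction_on with
    | _ n ih =>
      intro hn
      by_cases hnM : n ≤ M
      · exact hfg ⟨by omega, by omega⟩
      rw [hf n (by omega), hg n (by omega)]
      congr 1
      refine Finset.image_congr fun s hs => ?_
      have hs_pos := hS s hs
      have hs_le := hM s hs
      simpa only [Nat.cast_sub (show s ≤ n by omega)] using ih (n - s) (by omega) (by omega)
  intro i hi
  lift i to ℕ using le_of_lt hi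
  exact hnat i (Int.natCast_pos.1 hi)

theorem eq_of_triple {p q r n : ℕ} {i : ℤ} (hf : IsNimSeq {p, q, r} f) (hi : 0 < i)
    (hn : f (i - p) ≠ n ∧ f (i - q) ≠ n ∧ f (i - r) ≠ n)
    (hlt : ∀ j < n, f (i - p) = j ∨ f (i - q) = j ∨ f (i - r) = j) : f i = n := by
  rw [hf i hi]
  refine mex_eq_of_forall_lt_mem ?_ fun j hj => ?_
  · simpa [eq_comm] using hn
  · simpa [eq_comm] using hlt j hj

end IsNimSeq

/-- Position `0` is the boundary before a round of lag `a` of the nim-sequence `f` of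
`{m, 2 * m + k, 3 * m + k}`: the round occupies the positions from `1` on, and the last `3 * m + k`
values before it are constrained. The constraints are those the round actually uses, which leaves
them weak enough to hold with `a = 0` for the all-zero seed. The suffixes `far` and `near` refer to
the positions just after `-(2 * m + k)` and just after `-(m + k)`. -/
structure RoundStart (m k : ℕ) (a : ℤ) (f : ℤ → ℕ) : Prop where
  isNimSeq : IsNimSeq {m, 2 * m + k, 3 * m + k} f
  bounds : 0 ≤ a ∧ a < m ∧ k ≤ m
  ne_one : ∀ ⦃i : ℤ⦄, -(3 * m + k) < i → i ≤ -(2 * m + k) - a → f i ≠ 1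
  ne_zero : ∀ ⦃i : ℤ⦄, -(2 * m + k) - a < i → i ≤ -(2 * m + k) → f i ≠ 0
  zero_or_three_far : ∀ ⦃i : ℤ⦄, -(2 * m + k) < i → i ≤ -(m + k) - a → f i = 0 ∨ f i = 3
  zero_far : ∀ ⦃i : ℤ⦄, -(2 * m + k) < i → i ≤ -2 * m - a → f i = 0
  two : ∀ ⦃i : ℤ⦄, -(m + k) - a < i → i ≤ -(m + k) → f i = 2
  zero_or_three_near : ∀ ⦃i : ℤ⦄, -(m + k) < i → i ≤ -a → f i = 0 ∨ f i = 3
  zero_near : ∀ ⦃i : ℤ⦄, -(m + k) < i → -m - a < i → i ≤ -a → f i = 0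
  three : ∀ ⦃i : ℤ⦄, -a < i → i ≤ 0 → f i = 3

/-- The opening of a round of lag `a`: its values at the positions `0 < i ≤ 3 * m + k`, the range of
the largest move. The values at other `i` are junk. -/
def roundHead (m k : ℕ) (a i : ℤ) : ℕ :=
  if i ≤ m - a then 1
  else if i ≤ m then 0
  else if i ≤ 2 * m - a then 2
  else if i ≤ 3 * m - a then if i ≤ 2 * m + k then 1 else 3
  else if i ≤ 4 * m - a then 2
  else 1

namespace RoundStart

variable {m k : ℕ} {a i : ℤ} {f : ℤ → ℕ}

theorem eq_of_preds (h : RoundStart m k a f) {n : ℕ} (hi : 0 < i)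
    (hn : f (i - m) ≠ n ∧ f (i - (2 * m + k)) ≠ n ∧ f (i - (3 * m + k)) ≠ n)
    (hlt : ∀ j < n, f (i - m) = j ∨ f (i - (2 * m + k)) = j ∨ f (i - (3 * m + k)) = j) :
    f i = n :=
  h.isNimSeq.eq_of_triple hi (mod_cast hn) (mod_cast hlt)

theorem zero_or_three (h : RoundStart m k a f) (hi : -(m + k) < i) (hi' : i ≤ 0) :
    f i = 0 ∨ f i = 3 := by
  rcases le_or_gt i (-a) with hia | hia
  · exact h.zero_or_three_near hi hia
  · exact .inr (h.three hia hi')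

theorem eq_one_first (h : RoundStart m k a f) (hi : 0 < i) (hi' : i ≤ m - a) : f i = 1 := by
  obtain ⟨ha, -, -⟩ := h.bounds
  have h₁ : f (i - m) = 0 := h.zero_near (by omega) (by omega) (by omega)
  have h₂ : f (i - (2 * m + k)) = 0 ∨ f (i - (2 * m + k)) = 3 :=
    h.zero_or_three_far (by omega) (by omega)
  have h₃ : f (i - (3 * m + k)) ≠ 1 := h.ne_one (by omega) (by omega)
  exact h.eq_of_preds hi (by omega) fun j _ => by omega

theorem eq_zero_first (h : RoundStart m k a f) (hi : m - a < i) (hi' : i ≤ m) : f i = 0 := by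
  obtain ⟨-, ham, -⟩ := h.bounds
  have h₁ : f (i - m) = 3 := h.three (by omega) (by omega)
  have h₂ : f (i - (2 * m + k)) = 2 := h.two (by omega) (by omega)
  have h₃ : f (i - (3 * m + k)) ≠ 0 := h.ne_zero (by omega) (by omega)
  exact h.eq_of_preds (by omega) (by omega) fun j _ => by omega

theorem eq_two_first (h : RoundStart m k a f) (hi : m < i) (hi' : i ≤ 2 * m - a) : f i = 2 := by
  obtain ⟨ha, -, -⟩ := h.bounds
  have h₁ : f (i - m) = 1 := h.eq_one_first (by omega) (by omega)
  have h₂ : f (i - (2 * m + k)) = 0 ∨ f (i - (2 * m + k)) = 3 :=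
    h.zero_or_three (by omega) (by omega)
  have h₃ : f (i - (3 * m + k)) = 0 ∨ f (i - (3 * m + k)) = 3 :=
    h.zero_or_three_far (by omega) (by omega)
  have h_zero : f (i - (2 * m + k)) = 0 ∨ f (i - (3 * m + k)) = 0 := by
    rcases le_or_gt i (m + k - a) with hia | hia
    · exact .inr (h.zero_far (by omega) (by omega))
    · exact .inl (h.zero_near (by omega) (by omega) (by omega))
  exact h.eq_of_preds (by omega) (by omega) fun j _ => by omega

theorem eq_one_second (h : RoundStart m k a f) (hi : 2 * m - a < i) (hi' : i ≤ 3 * m - a)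
    (hi'' : i ≤ 2 * m + k) : f i = 1 := by
  obtain ⟨-, ham, hkm⟩ := h.bounds
  have h₁ : i ≤ 2 * m ∧ f (i - m) = 0 ∨ 2 * m < i ∧ f (i - m) = 2 := by
    rcases le_or_gt i (2 * m) with him | him
    · exact .inl ⟨him, h.eq_zero_first (by omega) (by omega)⟩
    · exact .inr ⟨him, h.eq_two_first (by omega) (by omega)⟩
  have h₂ : f (i - (2 * m + k)) = 0 ∨ f (i - (2 * m + k)) = 3 :=
    h.zero_or_three (by omega) (by omega)
  have h₃ : f (i - (3 * m + k)) ≠ 1 := by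
    rcases le_or_gt i (2 * m) with him | him
    · rw [h.two (by omega) (by omega)]; decide
    · have := h.zero_or_three (i := i - (3 * m + k)) (by omega) (by omega)
      omega
  have h_zero : 2 * m < i → f (i - (2 * m + k)) = 0 ∨ f (i - (3 * m + k)) = 0 := by
    intro him
    rcases le_or_gt i (2 * m + k - a) with hia | hia
    · exact .inl (h.zero_near (by omega) (by omega) (by omega))
    · exact .inr (h.zero_near (by omega) (by omega) (by omega))
  exact h.eq_of_preds (by omega) (by omega) fun j _ => by omega

theorem eq_three_first (h : RoundStart m k a f) (hi : 2 * m + k < i) (hi' : i ≤ 3 * m - a) :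
    f i = 3 := by
  obtain ⟨ha, -, -⟩ := h.bounds
  have h₁ : f (i - m) = 2 := h.eq_two_first (by omega) (by omega)
  have h₂ : f (i - (2 * m + k)) = 1 := h.eq_one_first (by omega) (by omega)
  have h₃ : f (i - (3 * m + k)) = 0 := h.zero_near (by omega) (by omega) (by omega)
  exact h.eq_of_preds (by omega) (by omega) fun j _ => by omega

theorem eq_two_second (h : RoundStart m k a f) (hi : 3 * m - a < i) (hi' : i ≤ 3 * m + k)
    (hi'' : i ≤ 4 * m - a) : f i = 2 := by
  obtain ⟨-, ham, hkm⟩ := h.bounds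
  have h₁ : f (i - m) = 1 := h.eq_one_second (by omega) (by omega) (by omega)
  have h₂ : f (i - (2 * m + k)) ≠ 2 := by
    rcases le_or_gt i (2 * m + k) with hik | hik
    · rw [h.three (by omega) (by omega)]; decide
    rcases le_or_gt i (3 * m + k - a) with hia | hia
    · rw [h.eq_one_first (by omega) (by omega)]; decide
    · rw [h.eq_zero_first (by omega) (by omega)]; decide
  have h₃ : f (i - (3 * m + k)) = 0 ∨ f (i - (3 * m + k)) = 3 :=
    h.zero_or_three (by omega) (by omega)
  have h_zero : f (i - (2 * m + k)) = 0 ∨ f (i - (3 * m + k)) = 0 := by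
    rcases le_or_gt i (3 * m + k - a) with hia | hia
    · exact .inr (h.zero_near (by omega) (by omega) (by omega))
    · exact .inl (h.eq_zero_first (by omega) (by omega))
  exact h.eq_of_preds (by omega) (by omega) fun j _ => by omega

theorem eq_one_third (h : RoundStart m k a f) (hi : 4 * m - a < i) (hi' : i ≤ 3 * m + k) :
    f i = 1 := by
  obtain ⟨-, ham, hkm⟩ := h.bounds
  have h₁ : f (i - m) = 2 := h.eq_two_second (by omega) (by omega) (by omega)
  have h₂ : f (i - (2 * m + k)) = 0 := h.eq_zero_first (by omega) (by omega)
  have h₃ : f (i - (3 * m + k)) = 3 := h.three (by omega) (by omega)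
  exact h.eq_of_preds (by omega) (by omega) fun j _ => by omega

theorem eq_zero_second (h : RoundStart m k a f) (hi : 3 * m + k < i)
    (hi' : i ≤ 4 * m + k - a) : f i = 0 := by
  obtain ⟨ha, -, hkm⟩ := h.bounds
  have h₁ : f (i - m) ≠ 0 := by
    rcases le_or_gt i (4 * m - a) with hia | hia
    · rw [h.eq_three_first (by omega) (by omega)]; decide
    rcases le_or_gt i (5 * m - a) with hia' | hia'
    · rw [h.eq_two_second (by omega) (by omega) (by omega)]; decide
    · rw [h.eq_one_third (by omega) (by omega)]; decide
  have h₂ : f (i - (2 * m + k)) = 2 := h.eq_two_first (by omega) (by omega)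
  have h₃ : f (i - (3 * m + k)) = 1 := h.eq_one_first (by omega) (by omega)
  exact h.eq_of_preds (by omega) (by omega) fun j _ => by omega

theorem eqOn_roundHead (h : RoundStart m k a f) :
    EqOn f (roundHead m k a) (Ioc 0 (3 * m + k)) := by
  rintro i ⟨hi, hi'⟩
  unfold roundHead
  split_ifs with hi₁ hi₂ hi₃ hi₄ hi₅ hi₆
  · exact h.eq_one_first hi hi₁
  · exact h.eq_zero_first (by omega) hi₂
  · exact h.eq_two_first (by omega) hi₃
  · exact h.eq_one_second (by omega) hi₄ hi₅
  · exact h.eq_three_first (by omega) hi₄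
  · exact h.eq_two_second (by omega) hi' hi₆
  · exact h.eq_one_third (by omega) hi'

theorem eq_three_of_add_lt (h : RoundStart m k a f) (hak : a + k < m)
    (hi : 4 * m + k - a < i) (hi' : i ≤ 4 * m + 2 * k) : f i = 3 := by
  have h₂ : f (i - (2 * m + k)) = 1 := h.eq_one_second (by omega) (by omega) (by omega)
  have h₁₃ : f (i - m) = 2 ∧ f (i - (3 * m + k)) = 0 ∨
      f (i - m) = 0 ∧ f (i - (3 * m + k)) = 2 := by
    rcases le_or_gt i (4 * m + k) with him | him
    · exact .inl ⟨h.eq_two_second (by omega) (by omega) (by omega),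
        h.eq_zero_first (by omega) (by omega)⟩
    · exact .inr ⟨h.eq_zero_second (by omega) (by omega),
        h.eq_two_first (by omega) (by omega)⟩
  exact h.eq_of_preds (by omega) (by omega) fun j _ => by omega

theorem next_of_add_lt (h : RoundStart m k a f) (hak : a + k < m) :
    RoundStart m k (a + k) fun i => f (4 * m + 2 * k + i) := by
  obtain ⟨ha, -, hkm⟩ := h.bounds
  exact {
    isNimSeq := h.isNimSeq.comp_add_left (by omega)
    bounds := by omega
    ne_one := fun i hi hi' => by rw [h.eq_two_first (by omega) (by omega)]; decide
    ne_zero := fun i hi hi' => by rw [h.eq_one_second (by omega) (by omega) (by omega)]; decide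
    zero_or_three_far := fun i hi hi' => .inr (h.eq_three_first (by omega) (by omega))
    zero_far := fun i hi hi' => by omega
    two := fun i hi hi' => h.eq_two_second (by omega) (by omega) (by omega)
    zero_or_three_near := fun i hi hi' => .inl (h.eq_zero_second (by omega) (by omega))
    zero_near := fun i hi _ hi' => h.eq_zero_second (by omega) (by omega)
    three := fun i hi hi' => h.eq_three_of_add_lt hak (by omega) (by omega) }

theorem eq_three_second_of_le_add (h : RoundStart m k a f) (hak : m ≤ a + k)
    (hi : 4 * m + k - a < i) (hi' : i ≤ 5 * m - a) : f i = 3 := by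
  obtain ⟨-, ham, -⟩ := h.bounds
  have h₁ : f (i - m) = 2 := h.eq_two_second (by omega) (by omega) (by omega)
  have h₂ : f (i - (2 * m + k)) = 1 := h.eq_one_second (by omega) (by omega) (by omega)
  have h₃ : f (i - (3 * m + k)) = 0 := h.eq_zero_first (by omega) (by omega)
  exact h.eq_of_preds (by omega) (by omega) fun j _ => by omega

theorem eq_two_third (h : RoundStart m k a f) (hi : 5 * m - a < i) (hi' : i ≤ 4 * m + k) :
    f i = 2 := by
  obtain ⟨-, ham, hkm⟩ := h.bounds
  have h₁ : f (i - m) = 1 := h.eq_one_third (by omega) (by omega)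
  have h₂ : f (i - (2 * m + k)) = 1 := h.eq_one_second (by omega) (by omega) (by omega)
  have h₃ : f (i - (3 * m + k)) = 0 := h.eq_zero_first (by omega) (by omega)
  exact h.eq_of_preds (by omega) (by omega) fun j _ => by omega

theorem eq_three_third_of_le_add (h : RoundStart m k a f) (hak : m ≤ a + k)
    (hi : 4 * m + k < i) (hi' : i ≤ 5 * m + k - a) : f i = 3 := by
  obtain ⟨ha, -, hkm⟩ := h.bounds
  have h₁ : f (i - m) = 0 := h.eq_zero_second (by omega) (by omega)
  have h₂ : f (i - (2 * m + k)) = 1 := h.eq_one_second (by omega) (by omega) (by omega)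
  have h₃ : f (i - (3 * m + k)) = 2 := h.eq_two_first (by omega) (by omega)
  exact h.eq_of_preds (by omega) (by omega) fun j _ => by omega

theorem eq_zero_third_of_le_add (h : RoundStart m k a f) (hak : m ≤ a + k)
    (hi : 5 * m + k - a < i) (hi' : i ≤ 6 * m + k - a) : f i = 0 := by
  obtain ⟨-, ham, -⟩ := h.bounds
  have h₁ : f (i - m) ≠ 0 := by
    rcases le_or_gt i (6 * m - a) with hia | hia
    · rw [h.eq_three_second_of_le_add hak (by omega) (by omega)]; decide
    rcases le_or_gt i (5 * m + k) with him | him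
    · rw [h.eq_two_third (by omega) (by omega)]; decide
    · rw [h.eq_three_third_of_le_add hak (by omega) (by omega)]; decide
  have h₂ : f (i - (2 * m + k)) = 2 := h.eq_two_second (by omega) (by omega) (by omega)
  have h₃ : f (i - (3 * m + k)) = 1 := h.eq_one_second (by omega) (by omega) (by omega)
  exact h.eq_of_preds (by omega) (by omega) fun j _ => by omega

theorem eq_three_fourth_of_le_add (h : RoundStart m k a f) (hak : m ≤ a + k)
    (hi : 6 * m + k - a < i) (hi' : i ≤ 5 * m + 2 * k) : f i = 3 := by
  obtain ⟨ha, ham, hkm⟩ := h.bounds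
  have h₁ : f (i - m) = 0 := h.eq_zero_third_of_le_add hak (by omega) (by omega)
  have h₂ : f (i - (2 * m + k)) = 1 := h.eq_one_third (by omega) (by omega)
  have h₃ : f (i - (3 * m + k)) = 2 := h.eq_two_second (by omega) (by omega) (by omega)
  exact h.eq_of_preds (by omega) (by omega) fun j _ => by omega

theorem next_of_le_add (h : RoundStart m k a f) (hak : m ≤ a + k) :
    RoundStart m k (a + k - m) fun i => f (5 * m + 2 * k + i) := by
  obtain ⟨ha, ham, hkm⟩ := h.bounds
  exact {
    isNimSeq := h.isNimSeq.comp_add_left (by omega)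
    bounds := by omega
    ne_one := fun i hi hi' => by rw [h.eq_two_second (by omega) (by omega) (by omega)]; decide
    ne_zero := fun i hi hi' => by rw [h.eq_one_third (by omega) (by omega)]; decide
    zero_or_three_far := fun i hi hi' => by
      rcases le_or_gt i (-(m + k) - a) with hia | hia
      · exact .inl (h.eq_zero_second (by omega) (by omega))
      · exact .inr (h.eq_three_second_of_le_add hak (by omega) (by omega))
    zero_far := fun i hi hi' => h.eq_zero_second (by omega) (by omega)
    two := fun i hi hi' => h.eq_two_third (by omega) (by omega)
    zero_or_three_near := fun i hi hi' => by
      rcases le_or_gt i (-k - a) with hia | hia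
      · exact .inr (h.eq_three_third_of_le_add hak (by omega) (by omega))
      · exact .inl (h.eq_zero_third_of_le_add hak (by omega) (by omega))
    zero_near := fun i _ hi hi' => h.eq_zero_third_of_le_add hak (by omega) (by omega)
    three := fun i hi hi' => h.eq_three_fourth_of_le_add hak (by omega) (by omega) }

theorem next (h : RoundStart m k a f) :
    RoundStart m k ((a + k) % m) fun i => f (4 * m + 3 * k + a - (a + k) % m + i) := by
  obtain ⟨ha, ham, hkm⟩ := h.bounds
  rcases lt_or_ge (a + k) (m : ℤ) with hak | hak
  · rw [Int.emod_eq_of_lt (by omega) hak]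
    convert h.next_of_add_lt hak using 3
    ring
  · have h_emod : (a + k) % m = a + k - m := by
      rw [← Int.sub_emod_right, Int.emod_eq_of_lt (by omega) (by omega)]
    rw [h_emod]
    convert h.next_of_le_add hak using 3
    ring

theorem of_eq_zero (hf : IsNimSeq {m, 2 * m + k, 3 * m + k} f) (hm : 0 < m) (hkm : k ≤ m)
    (hf₀ : ∀ i ≤ 0, f i = 0) : RoundStart m k 0 f where
  isNimSeq := hf
  bounds := by omega
  ne_one i _ hi := by rw [hf₀ i (by omega)]; decide
  ne_zero i _ _ := by omega
  zero_or_three_far i _ hi := .inl (hf₀ i (by omega))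
  zero_far i _ hi := hf₀ i (by omega)
  two i _ _ := by omega
  zero_or_three_near i _ hi := .inl (hf₀ i (by omega))
  zero_near i _ _ hi := hf₀ i (by omega)
  three i _ _ := by omega

theorem iterate_next (h : RoundStart m k 0 f) (n : ℕ) :
    RoundStart m k (n * k % m) fun i => f (n * (4 * m + 3 * k) - n * k % m + i) := by
  induction n with
  | zero => simpa using h
  | succ n ih =>
    have h_lag : ((n + 1 : ℕ) * k % m : ℤ) = (n * k % m + k) % m := by
      rw [Int.emod_add_emod]
      push_cast
      ring_nf
    rw [h_lag]
    convert ih.next using 3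
    push_cast
    ring

theorem eqOn_Ioi {g : ℤ → ℕ} (hf : RoundStart m k a f) (hg : RoundStart m k a g) :
    EqOn f g (Ioi 0) := by
  obtain ⟨ha, ham, -⟩ := hf.bounds
  refine hf.isNimSeq.eq_of_eqOn hg.isNimSeq (M := 3 * m + k) ?_ ?_ ?_
  · simp only [Finset.mem_insert, Finset.mem_singleton]
    omega
  · simp only [Finset.mem_insert, Finset.mem_singleton]
    omega
  · push_cast
    exact hf.eqOn_roundHead.trans hg.eqOn_roundHead.symm

theorem apply_add_of_dvd (h : RoundStart m k 0 f) {n : ℕ} (hn : m ∣ n * k) (hi : 0 < i) :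
    f (n * (4 * m + 3 * k) + i) = f i := by
  have h_lag : (n * k % m : ℤ) = 0 := mod_cast Nat.mod_eq_zero_of_dvd hn
  have h_again := h.iterate_next n
  simp only [h_lag, sub_zero] at h_again
  exact h_again.eqOn_Ioi h hi

end RoundStart

theorem stmt7_general (m k : ℕ) (hm : 0 < m) (hkm : k ≤ m) :
    Nat.gcd m k ∣ m * (4 * m + 3 * k) ∧
      ∀ x : ℕ, 1 ≤ x →
        sinkVal {m, 2 * m + k, 3 * m + k} (x + m * (4 * m + 3 * k) / Nat.gcd m k) =
          sinkVal {m, 2 * m + k, 3 * m + k} x := by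
  refine ⟨(Nat.gcd_dvd_left m k).mul_right _, fun x hx => ?_⟩
  set S : Finset ℕ := {m, 2 * m + k, 3 * m + k} with hS
  have hS_pos : ∀ s ∈ S, 0 < s := by
    simp only [hS, Finset.mem_insert, Finset.mem_singleton]
    omega
  have h_start : RoundStart m k 0 fun i => sinkVal S i.toNat :=
    .of_eq_zero (.sinkVal_toNat hS_pos) hm hkm fun i hi => by
      rw [Int.toNat_of_nonpos hi, sinkVal]
  have h_dvd : m ∣ m / Nat.gcd m k * k := by
    rw [Nat.div_mul_right_comm (Nat.gcd_dvd_left m k)]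
    exact Nat.dvd_lcm_left m k
  rw [← Nat.div_mul_right_comm (Nat.gcd_dvd_left m k), add_comm x]
  exact_mod_cast h_start.apply_add_of_dvd h_dvd (Int.natCast_pos.2 hx)

theorem stmt7 (m k : ℕ) (hk : 1 ≤ k) (hkm : k < m)
    (S : Finset ℕ) (hS : S = {m, 2 * m + k, 3 * m + k}) :
    Nat.gcd m k ∣ m * (4 * m + 3 * k) ∧
      ∀ x : ℕ, 1 ≤ x →
        sinkVal S (x + m * (4 * m + 3 * k) / Nat.gcd m k) = sinkVal S x := by
  subst hS
  exact stmt7_general m k (by omega) hkm.le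
end

section
/- Let m and δ be positive integers with d = δ mod 2m satisfying d ≤ m, let S = {m, m+δ, 2m+δ}, and let a = (δ − d)/(2m) + 1 (note that 2m divides δ − d). Then for all integers j and r with 0 ≤ j < 2a and 1 ≤ r ≤ m, v_S(j·m + r) = 1 if j is even and v_S(j·m + r) = 2 if j is odd. (This is the initial factor (1^m 2^m)^a of the period.) -/
/-!
For `0 < x ≤ m + δ` the moves by `m + δ` and `2 * m + δ` reach the sink, so the value at `x` is `1`
unless the value at `x - m` is already `1`. For `x ≤ 2 * m + δ` the move by `2 * m + δ` still
reaches the sink, while the move by `m + δ` lands in `[0, m]`, where only the values `0` and `1`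
occur; hence a `1` at `x - m` forces a `2` at `x`. So blocks of `m` ones and `m` twos alternate.
-/

theorem mex_eq_of_notMem_of_forall_lt_mem {A : Finset ℕ} {n : ℕ} (hn : n ∉ A)
    (hlt : ∀ k < n, k ∈ A) : mex A = n :=
  IsLeast.csInf_eq ⟨hn, fun k hk => not_lt.mp fun hkn => hk (hlt k hkn)⟩

section SinkVal

variable {S : Finset ℕ} {x n : ℕ}

theorem sinkVal_zero : sinkVal S 0 = 0 := by
  rw [sinkVal]

theorem sinkVal_of_pos (hS : ∀ s ∈ S, 0 < s) (hx : 0 < x) :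
    sinkVal S x = mex (S.image fun s => sinkVal S (x - s)) := by
  obtain ⟨y, rfl⟩ := Nat.exists_eq_add_one_of_ne_zero hx.ne'
  rw [sinkVal]
  congr 1
  refine Finset.image_congr fun s hs => ?_
  have hsub : y - (s - 1) = y + 1 - s := by
    have := hS s hs
    omega
  simp only [hsub]

theorem sinkVal_eq_of_forall_ne_of_forall_lt_exists (hS : ∀ s ∈ S, 0 < s) (hx : 0 < x)
    (hne : ∀ s ∈ S, sinkVal S (x - s) ≠ n) (hlt : ∀ k < n, ∃ s ∈ S, sinkVal S (x - s) = k) :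
    sinkVal S x = n := by
  rw [sinkVal_of_pos hS hx]
  apply mex_eq_of_notMem_of_forall_lt_mem
  · simpa only [Finset.mem_image, not_exists, not_and] using hne
  · simpa only [Finset.mem_image] using hlt

end SinkVal

/-- The additive sink-subtraction set `S(m, δ)`, in which the longest move is the sum of the other
two. -/
def additiveSet (m δ : ℕ) : Finset ℕ := {m, m + δ, 2 * m + δ}

section AdditiveSet

variable {m δ x : ℕ}

theorem forall_mem_additiveSet {p : ℕ → Prop} :
    (∀ s ∈ additiveSet m δ, p s) ↔ p m ∧ p (m + δ) ∧ p (2 * m + δ) := by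
  simp only [additiveSet, Finset.forall_mem_insert, Finset.mem_singleton, forall_eq]

theorem exists_mem_additiveSet {p : ℕ → Prop} :
    (∃ s ∈ additiveSet m δ, p s) ↔ p m ∨ p (m + δ) ∨ p (2 * m + δ) := by
  simp only [additiveSet, Finset.exists_mem_insert, Finset.mem_singleton, exists_eq_left]

theorem pos_of_mem_additiveSet (hm : 0 < m) : ∀ s ∈ additiveSet m δ, 0 < s :=
  forall_mem_additiveSet.mpr ⟨hm, by omega, by omega⟩

theorem sinkVal_additiveSet_eq_one (hm : 0 < m) (hx : 0 < x) (hxδ : x ≤ m + δ)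
    (hprev : sinkVal (additiveSet m δ) (x - m) ≠ 1) : sinkVal (additiveSet m δ) x = 1 := by
  have hmid : sinkVal (additiveSet m δ) (x - (m + δ)) = 0 := by
    rw [Nat.sub_eq_zero_of_le hxδ, sinkVal_zero]
  have hlong : sinkVal (additiveSet m δ) (x - (2 * m + δ)) = 0 := by
    rw [Nat.sub_eq_zero_of_le (by omega), sinkVal_zero]
  refine sinkVal_eq_of_forall_ne_of_forall_lt_exists (pos_of_mem_additiveSet hm) hx ?_ ?_
  · exact forall_mem_additiveSet.mpr ⟨hprev, by omega, by omega⟩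
  · intro k hk
    exact exists_mem_additiveSet.mpr (by omega)

theorem sinkVal_additiveSet_eq_one_of_le (hx : 0 < x) (hxm : x ≤ m) :
    sinkVal (additiveSet m δ) x = 1 := by
  apply sinkVal_additiveSet_eq_one (by omega) hx (by omega)
  rw [Nat.sub_eq_zero_of_le hxm, sinkVal_zero]
  exact zero_ne_one

theorem sinkVal_additiveSet_le_one_of_le (hxm : x ≤ m) : sinkVal (additiveSet m δ) x ≤ 1 := by
  rcases Nat.eq_zero_or_pos x with rfl | hx
  · rw [sinkVal_zero]
    exact zero_le_one
  · exact (sinkVal_additiveSet_eq_one_of_le hx hxm).le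

theorem sinkVal_additiveSet_add_eq_two (hm : 0 < m) (hxδ : x ≤ m + δ)
    (hx : sinkVal (additiveSet m δ) x = 1) : sinkVal (additiveSet m δ) (x + m) = 2 := by
  have hshort : sinkVal (additiveSet m δ) (x + m - m) = 1 := by
    rwa [Nat.add_sub_cancel]
  have hmid : sinkVal (additiveSet m δ) (x + m - (m + δ)) ≤ 1 :=
    sinkVal_additiveSet_le_one_of_le (by omega)
  have hlong : sinkVal (additiveSet m δ) (x + m - (2 * m + δ)) = 0 := by
    rw [Nat.sub_eq_zero_of_le (by omega), sinkVal_zero]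
  refine sinkVal_eq_of_forall_ne_of_forall_lt_exists (pos_of_mem_additiveSet hm) (by omega) ?_ ?_
  · exact forall_mem_additiveSet.mpr ⟨by omega, by omega, by omega⟩
  · intro k hk
    exact exists_mem_additiveSet.mpr (by omega)

theorem sinkVal_additiveSet_even_mul_add {i r : ℕ} (hr : 1 ≤ r) (hrm : r ≤ m)
    (hi : 2 * i * m + r ≤ m + δ) : sinkVal (additiveSet m δ) (2 * i * m + r) = 1 := by
  induction i with
  | zero => simpa only [mul_zero, zero_mul, zero_add] using sinkVal_additiveSet_eq_one_of_le hr hrm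
  | succ i ih =>
    have hm : 0 < m := by omega
    have hstep : 2 * (i + 1) * m + r = 2 * i * m + r + m + m := by ring
    have hle : 2 * i * m + r ≤ m + δ := by omega
    have htwo : sinkVal (additiveSet m δ) (2 * i * m + r + m) = 2 :=
      sinkVal_additiveSet_add_eq_two hm hle (ih hle)
    apply sinkVal_additiveSet_eq_one hm (by omega) hi
    rw [hstep, Nat.add_sub_cancel, htwo]
    decide

theorem sinkVal_additiveSet_odd_mul_add {i r : ℕ} (hr : 1 ≤ r) (hrm : r ≤ m)
    (hi : 2 * i * m + r ≤ m + δ) : sinkVal (additiveSet m δ) ((2 * i + 1) * m + r) = 2 := by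
  have hstep : (2 * i + 1) * m + r = 2 * i * m + r + m := by ring
  rw [hstep]
  exact sinkVal_additiveSet_add_eq_two (by omega) hi (sinkVal_additiveSet_even_mul_add hr hrm hi)

end AdditiveSet

theorem stmt8_general (m δ j r : ℕ) (hj : j < 2 * (δ / (2 * m) + 1)) (hr : 1 ≤ r) (hrm : r ≤ m) :
    (Even j → sinkVal (additiveSet m δ) (j * m + r) = 1) ∧
      (¬ Even j → sinkVal (additiveSet m δ) (j * m + r) = 2) := by
  have hle {i : ℕ} (hi : i ≤ δ / (2 * m)) : 2 * i * m + r ≤ m + δ := by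
    have hiδ : i * (2 * m) ≤ δ := Nat.mul_le_of_le_div _ _ _ hi
    linarith
  obtain ⟨i, rfl | rfl⟩ := Nat.even_or_odd' j
  · refine ⟨fun _ => ?_, fun h => absurd (even_two_mul i) h⟩
    exact sinkVal_additiveSet_even_mul_add hr hrm (hle (by omega))
  · refine ⟨fun h => absurd h (Nat.not_even_two_mul_add_one i), fun _ => ?_⟩
    exact sinkVal_additiveSet_odd_mul_add hr hrm (hle (by omega))

theorem stmt8 (m δ : ℕ) (hm : 0 < m) (hδ : 0 < δ)
    (S : Finset ℕ) (hS : S = {m, m + δ, 2 * m + δ})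
    (d : ℕ) (hd : d = δ % (2 * m)) (hdm : d ≤ m)
    (a : ℕ) (ha : a = (δ - d) / (2 * m) + 1) :
    ∀ j r : ℕ, j < 2 * a → 1 ≤ r → r ≤ m →
      (Even j → sinkVal S (j * m + r) = 1) ∧
      (¬ Even j → sinkVal S (j * m + r) = 2) := by
  subst hS hd ha
  exact fun j r hj => stmt8_general m δ j r (by rwa [Nat.div_eq_sub_mod_div])
end
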